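/- One-way reversible automata (1RFA) recognize strictly fewer languages than sweeping reversible automata (sRFA): every language recognized by a 1RFA is recognized by some sRFA over the same alphabet, and there exists a language (namely (aa)* ∪ {a} over the alphabet {a}) recognized by some sRFA but by no 1RFA. -/

import Mathlib

open scoped Classical

/-- Run a partial transition function along a word. -/
def runP {A Q : Type} (d : A → Q → Option Q) (q : Q) (w : List A) : Option Q :=
  w.foldl (fun o a => o.bind (d a)) (some q)

/-- One-way reversible finite automaton (1RFA): a partial deterministic automaton
with a single initial state and injective transition functions. -/
structure RFA (A Q : Type) where
  start : Q
  next : A → Q → Option Q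
  inj : ∀ a q q' r, next a q = some r → next a q' = some r → q = q'
  accept : Set Q

def RFA.Language {A Q : Type} (M : RFA A Q) : Set (List A) :=
  {w | ∃ qf ∈ M.accept, runP M.next M.start w = some qf}

/-- A permutation automaton (1PerFA): every transition function is a totally
defined bijection. -/
def RFA.IsPerm {A Q : Type} (M : RFA A Q) : Prop :=
  (∀ a q, (M.next a q).isSome) ∧ ∀ a r, ∃ q, M.next a q = some r

/-- One-way reversible finite automaton with multiple initial states (MRFA). -/
structure MRFA (A Q : Type) where
  init : Set Q
  next : A → Q → Option Q
  inj : ∀ a q q' r, next a q = some r → next a q' = some r → q = q'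
  accept : Set Q

def MRFA.Language {A Q : Type} (M : MRFA A Q) : Set (List A) :=
  {w | ∃ q0 ∈ M.init, ∃ qf ∈ M.accept, runP M.next q0 w = some qf}

def Rec1RFA (A : Type) (L : Set (List A)) : Prop :=
  ∃ (Q : Type) (_ : Fintype Q) (M : RFA A Q), M.Language = L

def Rec1RFA1 (A : Type) (L : Set (List A)) : Prop :=
  ∃ (Q : Type) (_ : Fintype Q) (M : RFA A Q), M.accept.ncard = 1 ∧ M.Language = L

def Rec1PerFA (A : Type) (L : Set (List A)) : Prop :=
  ∃ (Q : Type) (_ : Fintype Q) (M : RFA A Q), M.IsPerm ∧ M.Language = L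

def Rec1PerFA1 (A : Type) (L : Set (List A)) : Prop :=
  ∃ (Q : Type) (_ : Fintype Q) (M : RFA A Q),
    M.IsPerm ∧ M.accept.ncard = 1 ∧ M.Language = L

def RecMRFA (A : Type) (L : Set (List A)) : Prop :=
  ∃ (Q : Type) (_ : Fintype Q) (M : MRFA A Q), M.Language = L

/-- Sweeping reversible automaton (sRFA), given without its accepting set:
states `Qp` move rightwards, states `Qm` move leftwards; `startT` is the
transition of the left end-marker function on the initial state, `turnL` its
restriction to `Qm`, and `turnR` is the transition function at the right
end-marker.  All transition functions are partial and injective, and the left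
end-marker function is injective on the whole of `{q₀} ∪ Q₋`. -/
structure SRFA (A Qp Qm : Type) where
  start : Qp
  nextP : A → Qp → Option Qp
  nextM : A → Qm → Option Qm
  startT : Option Qp
  turnL : Qm → Option Qp
  turnR : Qp → Option Qm
  injP : ∀ a q q' r, nextP a q = some r → nextP a q' = some r → q = q'
  injM : ∀ a q q' r, nextM a q = some r → nextM a q' = some r → q = q'
  injL : ∀ q q' r, turnL q = some r → turnL q' = some r → q = q'
  injR : ∀ q q' r, turnR q = some r → turnR q' = some r → q = q'
  startT_ne_turnL : ∀ q r, startT = some r → turnL q ≠ some r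

/-- One step of a sweeping automaton on input `⊢w⊣`: a configuration is a state
together with a head position in `{0, 1, …, |w| + 1}`, where position `0` is the
left end-marker, position `i` with `1 ≤ i ≤ |w|` carries the `i`-th input
symbol, and position `|w| + 1` is the right end-marker.  The result is `none`
when the corresponding transition is undefined and the computation halts. -/
noncomputable def SRFA.step {A Qp Qm : Type} (M : SRFA A Qp Qm) (w : List A) :
    (Qp ⊕ Qm) × ℕ → Option ((Qp ⊕ Qm) × ℕ)
  | (Sum.inl q, i) =>
      if i = 0 then
        if q = M.start then M.startT.map (fun p => (Sum.inl p, 1)) else none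
      else if i = w.length + 1 then
        (M.turnR q).map (fun r => (Sum.inr r, w.length))
      else
        (w[i - 1]?.bind (fun a => M.nextP a q)).map (fun p => (Sum.inl p, i + 1))
  | (Sum.inr q, i) =>
      if i = 0 then (M.turnL q).map (fun p => (Sum.inl p, 1))
      else if i = w.length + 1 then none
      else (w[i - 1]?.bind (fun a => M.nextM a q)).map (fun r => (Sum.inr r, i - 1))

/-- The configuration reached after `n` steps of the computation on `w`,
starting in the initial state at the left end-marker (or `none` if the
computation has halted before). -/
noncomputable def SRFA.steps {A Qp Qm : Type} (M : SRFA A Qp Qm) (w : List A) :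
    ℕ → Option ((Qp ⊕ Qm) × ℕ)
  | 0 => some (Sum.inl M.start, 0)
  | n + 1 => (M.steps w n).bind (M.step w)

/-- Acceptance of an ordinary sRFA: the computation halts at the right
end-marker in an accepting state `q ∈ F ⊆ Q₊`. -/
def SRFA.AcceptsR {A Qp Qm : Type} (M : SRFA A Qp Qm) (F : Set Qp) (w : List A) : Prop :=
  ∃ n q, M.steps w n = some (Sum.inl q, w.length + 1) ∧ q ∈ F ∧
    M.step w (Sum.inl q, w.length + 1) = none

def SRFA.LangR {A Qp Qm : Type} (M : SRFA A Qp Qm) (F : Set Qp) : Set (List A) :=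
  {w | M.AcceptsR F w}

/-- Acceptance of an sRFA with acceptance at both sides: the computation halts
at either end-marker in an accepting state `c ∈ F ⊆ Q₊ ∪ Q₋`. -/
def SRFA.AcceptsB {A Qp Qm : Type} (M : SRFA A Qp Qm) (F : Set (Qp ⊕ Qm)) (w : List A) : Prop :=
  ∃ n c i, M.steps w n = some (c, i) ∧ c ∈ F ∧ (i = 0 ∨ i = w.length + 1) ∧
    M.step w (c, i) = none

def SRFA.LangB {A Qp Qm : Type} (M : SRFA A Qp Qm) (F : Set (Qp ⊕ Qm)) : Set (List A) :=
  {w | M.AcceptsB F w}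

def RecSRFA (A : Type) (L : Set (List A)) : Prop :=
  ∃ (Qp Qm : Type) (_ : Fintype Qp) (_ : Fintype Qm) (M : SRFA A Qp Qm) (F : Set Qp),
    M.LangR F = L

/-- The unary language `(aa)* ∪ {a}`. -/
def LevenOrA : Set (List Unit) := {w | w.length % 2 = 0 ∨ w = [()]}

/-!
On a finite state set, a reversible computation that reads a word `u` again and again returns to
the state it started from, because the cycle it eventually enters can be traced backwards. So if
every power of `u` is a prefix of a word of a 1RFA language `L`, some `u ^ p` with `0 < p` can be
put in front of any word without affecting membership in `L`. If `(aa)* ∪ {a}` were such an `L`,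
doing this twice to the word `a`, with `u = a`, would put `a ^ (2 * p + 1)` in the language.

A sweeping automaton, in contrast, can compute the parity in its first sweep and, on odd length,
use the second sweep to check that the length is one: a left-moving path with a single transition
has no way to continue on longer words.
-/

section runP

variable {A Q : Type}

theorem runP_append (d : A → Q → Option Q) (q : Q) (u v : List A) :
    runP d q (u ++ v) = (runP d q u).bind fun p => runP d p v := by
  unfold runP
  rw [List.foldl_append]
  cases u.foldl (fun o a => o.bind (d a)) (some q) with
  | none => exact List.foldl_fixed' (fun _ => rfl) v
  | some p => rfl

theorem runP_concat (d : A → Q → Option Q) (q : Q) (w : List A) (a : A) :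
    runP d q (w ++ [a]) = (runP d q w).bind (d a) :=
  runP_append d q w [a]

theorem runP_cons (d : A → Q → Option Q) (q : Q) (a : A) (w : List A) :
    runP d q (a :: w) = (d a q).bind fun p => runP d p w :=
  runP_append d q [a] w

theorem runP_injective {d : A → Q → Option Q}
    (hd : ∀ a q q' r, d a q = some r → d a q' = some r → q = q')
    {w : List A} {q q' r : Q} (h : runP d q w = some r) (h' : runP d q' w = some r) : q = q' := by
  induction w generalizing q q' with
  | nil => exact Option.some.inj (h.trans h'.symm)
  | cons a w ih =>
    rw [runP_cons, Option.bind_eq_some_iff] at h h'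
    obtain ⟨p, hp, hr⟩ := h
    obtain ⟨p', hp', hr'⟩ := h'
    obtain rfl := ih hr hr'
    exact hd a q q' p hp hp'

end runP

theorem exists_pos_apply_eq_apply_zero {Q : Type*} [Finite Q] {s : ℕ → Q}
    (hs : ∀ i j, s (i + 1) = s (j + 1) → s i = s j) : ∃ p, 0 < p ∧ s p = s 0 := by
  have hback (p i : ℕ) (h : s (i + p) = s i) : s p = s 0 := by
    induction i with
    | zero => rwa [zero_add] at h
    | succ i ih => exact ih (hs _ _ (by rwa [Nat.add_right_comm] at h))
  obtain ⟨i, j, hij, heq⟩ : ∃ i j, i < j ∧ s i = s j := by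
    obtain ⟨i, j, hne, heq⟩ := Finite.exists_ne_map_eq_of_infinite s
    exact hne.lt_or_gt.elim (⟨i, j, ·, heq⟩) (⟨j, i, ·, heq.symm⟩)
  obtain ⟨p, rfl⟩ := Nat.exists_eq_add_of_le hij.le
  exact ⟨p, by omega, hback p i heq.symm⟩

section periodicity

variable {A Q : Type} [Finite Q]

theorem exists_pos_runP_flatten_replicate {d : A → Q → Option Q}
    (hd : ∀ a q q' r, d a q = some r → d a q' = some r → q = q') {q : Q} {u : List A}
    (hdef : ∀ n, ∃ r, runP d q (List.replicate n u).flatten = some r) :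
    ∃ p, 0 < p ∧ runP d q (List.replicate p u).flatten = some q := by
  choose s hs using hdef
  have hs_zero : s 0 = q := Option.some.inj (hs 0).symm
  have hs_succ (n : ℕ) : runP d (s n) u = some (s (n + 1)) := by
    rw [← hs (n + 1), List.replicate_succ', List.flatten_concat, runP_append, hs n,
      Option.bind_some]
  obtain ⟨p, hp, hsp⟩ := exists_pos_apply_eq_apply_zero (s := s) fun i j h =>
    runP_injective hd (hs_succ i) (h ▸ hs_succ j)
  exact ⟨p, hp, by rw [hs, hsp, hs_zero]⟩

theorem RFA.exists_pos_append_mem_language_iff (M : RFA A Q) {u : List A}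
    (hu : ∀ n, ∃ w, (List.replicate n u).flatten ++ w ∈ M.Language) :
    ∃ p, 0 < p ∧ ∀ w, (List.replicate p u).flatten ++ w ∈ M.Language ↔ w ∈ M.Language := by
  have hdef (n : ℕ) : ∃ r, runP M.next M.start (List.replicate n u).flatten = some r := by
    obtain ⟨w, qf, -, hrun⟩ := hu n
    rw [runP_append, Option.bind_eq_some_iff] at hrun
    exact hrun.imp fun _ h => h.1
  obtain ⟨p, hp, hrun⟩ := exists_pos_runP_flatten_replicate M.inj hdef
  refine ⟨p, hp, fun w => ?_⟩
  simp only [RFA.Language, Set.mem_ofPred_eq, runP_append, hrun, Option.bind_some]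

end periodicity

theorem mem_levenOrA_iff {w : List Unit} : w ∈ LevenOrA ↔ w.length % 2 = 0 ∨ w.length = 1 :=
  or_congr_right (by rw [List.length_eq_one_iff]; exact ⟨fun h => ⟨(), h⟩, fun ⟨_, h⟩ => h⟩)

theorem not_rec1RFA_levenOrA : ¬ Rec1RFA Unit LevenOrA := by
  rintro ⟨Q, _, M, hM⟩
  have hmem (w : List Unit) : w ∈ M.Language ↔ w.length % 2 = 0 ∨ w.length = 1 :=
    hM ▸ mem_levenOrA_iff
  obtain ⟨p, hp, hperiod⟩ := M.exists_pos_append_mem_language_iff (u := [()]) fun n =>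
    ⟨List.replicate n (), (hmem _).mpr (Or.inl (by simp [← two_mul]))⟩
  have hone : [()] ∈ M.Language := (hmem _).mpr (Or.inr rfl)
  have hlong := (hmem _).mp ((hperiod _).mpr ((hperiod _).mpr hone))
  simp only [List.flatten_replicate_singleton, List.length_append, List.length_replicate,
    List.length_singleton] at hlong
  omega

namespace SRFA

variable {A Qp Qm : Type} {M : SRFA A Qp Qm} {w : List A}

/-- The configuration `c` occurs in the computation of `M` on `⊢w⊣`. Configurations are encoded as
in `SRFA.step`: a state together with a head position in `{0, …, |w| + 1}`. -/
def Reaches (M : SRFA A Qp Qm) (w : List A) (c : (Qp ⊕ Qm) × ℕ) : Prop :=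
  ∃ n, M.steps w n = some c

theorem reaches_iff {c : (Qp ⊕ Qm) × ℕ} :
    M.Reaches w c ↔
      (Sum.inl M.start, 0) = c ∨ ∃ c', M.Reaches w c' ∧ M.step w c' = some c := by
  constructor
  · rintro ⟨_ | n, h⟩
    · exact Or.inl (Option.some.inj h)
    · obtain ⟨c', hc', hstep⟩ := Option.bind_eq_some_iff.mp h
      exact Or.inr ⟨c', ⟨n, hc'⟩, hstep⟩
  · rintro (h | ⟨c', ⟨n, hc'⟩, hstep⟩)
    · exact ⟨0, congrArg some h⟩
    · exact ⟨n + 1, Option.bind_eq_some_iff.mpr ⟨c', hc', hstep⟩⟩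

theorem reaches_inl_one_iff {q : Qp} :
    M.Reaches w (Sum.inl q, 1) ↔
      M.startT = some q ∨ ∃ r, M.Reaches w (Sum.inr r, 0) ∧ M.turnL r = some q := by
  have hstart : M.Reaches w (Sum.inl M.start, 0) := ⟨0, rfl⟩
  rw [reaches_iff]
  constructor
  · rintro (h | ⟨⟨_ | _, _⟩, _, hstep⟩) <;>
      grind [step, Option.map_eq_some_iff, Option.bind_eq_some_iff]
  · grind [step]

theorem reaches_inl_add_two_iff {q : Qp} {i : ℕ} (hi : i < w.length) :
    M.Reaches w (Sum.inl q, i + 2) ↔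
      ∃ p, M.Reaches w (Sum.inl p, i + 1) ∧ M.nextP w[i] p = some q := by
  rw [reaches_iff]
  constructor
  · rintro (h | ⟨⟨_ | _, _⟩, _, hstep⟩) <;>
      grind [step, Option.map_eq_some_iff, Option.bind_eq_some_iff]
  · grind [step]

theorem reaches_inr_length_iff {r : Qm} :
    M.Reaches w (Sum.inr r, w.length) ↔
      ∃ q, M.Reaches w (Sum.inl q, w.length + 1) ∧ M.turnR q = some r := by
  rw [reaches_iff]
  constructor
  · rintro (h | ⟨⟨_ | _, _⟩, _, hstep⟩) <;>
      grind [step, Option.map_eq_some_iff, Option.bind_eq_some_iff]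
  · grind [step]

theorem reaches_inr_iff {r : Qm} {i : ℕ} (hi : i < w.length) :
    M.Reaches w (Sum.inr r, i) ↔
      ∃ s, M.Reaches w (Sum.inr s, i + 1) ∧ M.nextM w[i] s = some r := by
  rw [reaches_iff]
  constructor
  · rintro (h | ⟨⟨_ | _, _⟩, _, hstep⟩) <;>
      grind [step, Option.map_eq_some_iff, Option.bind_eq_some_iff]
  · grind [step]

theorem reaches_inl_succ_iff_runP_take {q : Qp} {i : ℕ} (hi : i ≤ w.length) :
    M.Reaches w (Sum.inl q, i + 1) ↔
      ∃ p, M.Reaches w (Sum.inl p, 1) ∧ runP M.nextP p (w.take i) = some q := by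
  induction i generalizing q with
  | zero => simp [runP]
  | succ i ih =>
    simp only [reaches_inl_add_two_iff hi, ih (Nat.le_of_succ_le hi),
      ← List.take_concat_get' w i hi, runP_concat, Option.bind_eq_some_iff]
    tauto

theorem reaches_inl_length_succ_iff {q : Qp} :
    M.Reaches w (Sum.inl q, w.length + 1) ↔
      ∃ p, M.Reaches w (Sum.inl p, 1) ∧ runP M.nextP p w = some q := by
  simpa only [List.take_length] using reaches_inl_succ_iff_runP_take le_rfl

theorem reaches_inr_iff_runP_drop {r : Qm} {i : ℕ} (hi : i ≤ w.length) :
    M.Reaches w (Sum.inr r, i) ↔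
      ∃ s, M.Reaches w (Sum.inr s, w.length) ∧ runP M.nextM s (w.drop i).reverse = some r := by
  induction hi using Nat.decreasingInduction generalizing r with
  | self => simp [runP]
  | of_succ i hi ih =>
    simp only [reaches_inr_iff hi, ih, List.drop_eq_getElem_cons hi, List.reverse_cons,
      runP_concat, Option.bind_eq_some_iff]
    tauto

theorem reaches_inr_zero_iff {r : Qm} :
    M.Reaches w (Sum.inr r, 0) ↔
      ∃ s, M.Reaches w (Sum.inr s, w.length) ∧ runP M.nextM s w.reverse = some r :=
  reaches_inr_iff_runP_drop (Nat.zero_le _)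

theorem mem_langR_iff {F : Set Qp} :
    w ∈ M.LangR F ↔ ∃ q ∈ F, M.Reaches w (Sum.inl q, w.length + 1) ∧ M.turnR q = none := by
  have hhalt (q : Qp) : M.step w (Sum.inl q, w.length + 1) = none ↔ M.turnR q = none := by
    simp [SRFA.step]
  constructor
  · rintro ⟨n, q, hn, hq, hstep⟩
    exact ⟨q, hq, ⟨n, hn⟩, (hhalt q).mp hstep⟩
  · rintro ⟨q, hq, ⟨n, hn⟩, hturn⟩
    exact ⟨n, q, hn, hq, (hhalt q).mpr hturn⟩

end SRFA

/-- A one-way reversible automaton as a sweeping one that halts at the end of its first sweep. -/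
def RFA.toSRFA {A Q : Type} (M : RFA A Q) : SRFA A Q Empty where
  start := M.start
  nextP := M.next
  nextM := fun _ q => q.elim
  startT := some M.start
  turnL := Empty.elim
  turnR := fun _ => none
  injP := M.inj
  injM := fun _ q => q.elim
  injL := fun q => q.elim
  injR := by simp
  startT_ne_turnL := fun q => q.elim

theorem RFA.langR_toSRFA {A Q : Type} (M : RFA A Q) : M.toSRFA.LangR M.accept = M.Language := by
  ext w
  have hsweep (p : Q) : M.toSRFA.Reaches w (Sum.inl p, 1) ↔ M.start = p := by
    simp [SRFA.reaches_inl_one_iff, RFA.toSRFA]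
  simp only [SRFA.mem_langR_iff, SRFA.reaches_inl_length_succ_iff, hsweep, exists_eq_left']
  simp [RFA.Language, RFA.toSRFA]

theorem Rec1RFA.recSRFA {A : Type} {L : Set (List A)} : Rec1RFA A L → RecSRFA A L := by
  rintro ⟨Q, hQ, M, rfl⟩
  exact ⟨Q, Empty, hQ, inferInstance, M.toSRFA, M.accept, M.langR_toSRFA⟩

/-- A sweeping automaton for `(aa)* ∪ {a}`. The right-moving states consist of the cycle `0 ⇄ 1`
for the parity, used in the first sweep, and the path `2 → 3`, used in the third; the left-moving
states form the path `false → true`, entered only from the odd parity `1`. The accepting states are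
`0` and `3`. -/
def levenOrASRFA : SRFA Unit (Fin 4) Bool where
  start := 0
  nextP := fun _ => ![some 1, some 0, some 3, none]
  nextM := fun _ b => bif b then none else some true
  startT := some 0
  turnL := fun b => bif b then some 2 else none
  turnR := ![none, some false, none, none]
  injP := by decide
  injM := by decide
  injL := by decide
  injR := by decide
  startT_ne_turnL := by decide

namespace levenOrASRFA

variable {w : List Unit}

theorem runP_nextP_zero (w : List Unit) :
    runP levenOrASRFA.nextP 0 w = some (if w.length % 2 = 0 then 0 else 1) := by
  induction w using List.reverseRecOn with
  | nil => rfl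
  | append_singleton w a ih =>
    rw [runP_concat, ih, Option.bind_some, List.length_append, List.length_singleton]
    rcases Nat.mod_two_eq_zero_or_one w.length with h | h <;>
      simp [Nat.add_mod, h, levenOrASRFA]

theorem runP_nextM_false_eq_some_true_iff :
    runP levenOrASRFA.nextM false w = some true ↔ w.length = 1 := by
  rcases w with _ | ⟨a, _ | ⟨b, w⟩⟩ <;> simp [runP, levenOrASRFA, List.foldl_fixed']

theorem reaches_inl_one_iff {p : Fin 4} :
    levenOrASRFA.Reaches w (Sum.inl p, 1) ↔ p = 0 ∨ p = 2 ∧ w.length = 1 := by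
  have hturnL (b : Bool) : levenOrASRFA.turnL b = some p ↔ b = true ∧ p = 2 := by
    revert b p; decide
  have hturnR (q : Fin 4) (b : Bool) : levenOrASRFA.turnR q = some b ↔ q = 1 ∧ b = false := by
    revert q b; decide
  have hfirst : levenOrASRFA.Reaches w (Sum.inl 0, 1) :=
    SRFA.reaches_inl_one_iff.mpr (Or.inl rfl)
  constructor
  · intro hp
    obtain h | ⟨r, hr, hrp⟩ := SRFA.reaches_inl_one_iff.mp hp
    · exact Or.inl (Option.some.inj h).symm
    · obtain ⟨rfl, rfl⟩ := (hturnL r).mp hrp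
      obtain ⟨s, hs, hrun⟩ := SRFA.reaches_inr_zero_iff.mp hr
      obtain ⟨q, -, hqs⟩ := SRFA.reaches_inr_length_iff.mp hs
      obtain ⟨-, rfl⟩ := (hturnR q s).mp hqs
      exact Or.inr ⟨rfl, by simpa using runP_nextM_false_eq_some_true_iff.mp hrun⟩
  · rintro (rfl | ⟨rfl, hlen⟩)
    · exact hfirst
    · have hodd : levenOrASRFA.Reaches w (Sum.inl 1, w.length + 1) :=
        SRFA.reaches_inl_length_succ_iff.mpr ⟨0, hfirst, by simp [runP_nextP_zero, hlen]⟩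
      have hturn : levenOrASRFA.Reaches w (Sum.inr false, w.length) :=
        SRFA.reaches_inr_length_iff.mpr ⟨1, hodd, rfl⟩
      have hback : levenOrASRFA.Reaches w (Sum.inr true, 0) :=
        SRFA.reaches_inr_zero_iff.mpr
          ⟨false, hturn, runP_nextM_false_eq_some_true_iff.mpr (by simpa using hlen)⟩
      exact SRFA.reaches_inl_one_iff.mpr (Or.inr ⟨true, hback, rfl⟩)

theorem langR_eq : levenOrASRFA.LangR {0, 3} = LevenOrA := by
  ext w
  simp only [SRFA.mem_langR_iff, SRFA.reaches_inl_length_succ_iff, reaches_inl_one_iff,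
    mem_levenOrA_iff]
  constructor
  · rintro ⟨q, hq, ⟨p, rfl | ⟨rfl, hlen⟩, hrun⟩, -⟩
    · left
      by_contra hodd
      rw [runP_nextP_zero, if_neg hodd, Option.some.injEq] at hrun
      simp [← hrun] at hq
    · exact Or.inr hlen
  · rintro (heven | hlen)
    · exact ⟨0, by simp, ⟨0, by simp, by rw [runP_nextP_zero, if_pos heven]⟩, rfl⟩
    · obtain ⟨a, rfl⟩ := List.length_eq_one_iff.mp hlen
      exact ⟨3, by simp, ⟨2, by simp, rfl⟩, rfl⟩

end levenOrASRFA

theorem recSRFA_levenOrA : RecSRFA Unit LevenOrA :=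
  ⟨Fin 4, Bool, inferInstance, inferInstance, levenOrASRFA, {0, 3}, levenOrASRFA.langR_eq⟩

/-- 1RFA recognize strictly fewer languages than sRFA: every 1RFA
language is an sRFA language over the same alphabet, and `(aa)* ∪ {a}` is an
sRFA language which is not a 1RFA language. -/
theorem stmt9 :
    (∀ (A : Type) (L : Set (List A)), Rec1RFA A L → RecSRFA A L) ∧
    RecSRFA Unit LevenOrA ∧ ¬ Rec1RFA Unit LevenOrA :=
  ⟨fun _ _ => Rec1RFA.recSRFA, recSRFA_levenOrA, not_rec1RFA_levenOrA⟩
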